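/- arXiv:1905.07751 — 2 statements merged into one kernel-verified Lean document; each statement's English description precedes it below -/
import Mathlib

section
/- Let f and g be smooth real-valued functions on S¹ with zero mean. Then Λ(f·g) = Λ(Hf·Hg) + ∂₁(f·Hg + g·Hf) pointwise on S¹. -/
open Complex Filter MeasureTheory

noncomputable section

instance : Fact (0 < 2 * Real.pi) := ⟨by positivity⟩

/-- Hilbert transform on the circle `S¹ = ℝ/2πℤ`: Fourier multiplier `-i·sgn k`. -/
def Hop (f : AddCircle (2 * Real.pi) → ℂ) : AddCircle (2 * Real.pi) → ℂ :=
  fun x => ∑' k : ℤ, (-Complex.I) * (k.sign : ℂ) * fourierCoeff f k * fourier k x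

/-- `Λⁿ`: Fourier multiplier `|k|ⁿ`. -/
def Lamn (n : ℕ) (f : AddCircle (2 * Real.pi) → ℂ) : AddCircle (2 * Real.pi) → ℂ :=
  fun x => ∑' k : ℤ, ((|k| : ℤ) : ℂ) ^ n * fourierCoeff f k * fourier k x

/-- `∂₁ⁿ`: Fourier multiplier `(ik)ⁿ` (spatial derivative of smooth periodic functions). -/
def Dn (n : ℕ) (f : AddCircle (2 * Real.pi) → ℂ) : AddCircle (2 * Real.pi) → ℂ :=
  fun x => ∑' k : ℤ, (Complex.I * (k : ℂ)) ^ n * fourierCoeff f k * fourier k x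

/-- A smooth (rapidly decaying Fourier coefficients) real-valued zero-mean function on `S¹`,
given by the sum of its Fourier series. -/
def IsNice (f : AddCircle (2 * Real.pi) → ℂ) : Prop :=
  (∀ n : ℕ, Summable fun k : ℤ => ((|k| : ℤ) : ℝ) ^ n * ‖fourierCoeff f k‖) ∧
  (∀ x, (f x).im = 0) ∧ fourierCoeff f 0 = 0 ∧
  (∀ x, f x = ∑' k : ℤ, fourierCoeff f k * fourier k x)

theorem fnorm (k : ℤ) (x : AddCircle (2 * Real.pi)) : ‖(fourier k x : ℂ)‖ = 1 := by
  rw [fourier_apply]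
  exact Circle.norm_coe _

theorem coeff_hasSum {ι : Type} [Countable ι] (u : ι → ℂ) (φ : ι → ℤ)
    (F : AddCircle (2 * Real.pi) → ℂ) (hu : Summable fun i => ‖u i‖)
    (hF : ∀ x, HasSum (fun i => u i * fourier (φ i) x) (F x)) (k : ℤ) :
    fourierCoeff F k = ∑' i, (φ ⁻¹' {k}).indicator u i := by
  have h1 : ∀ i, ∫ t, fourier (-k) t • (u i * fourier (φ i) t) ∂(AddCircle.haarAddCircle (T := 2 * Real.pi))
      = (φ ⁻¹' {k}).indicator u i := by
    intro i
    have h2 : fourierCoeff (fun t : AddCircle (2 * Real.pi) => u i * fourier (φ i) t) k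
        = (φ ⁻¹' {k}).indicator u i := by
      rw [fourierCoeff.const_mul, fourierCoeff_fourier]
      by_cases h : φ i = k
      · simp [h]
      · have : k ≠ φ i := fun h' => h h'.symm
        simp [h, this]
    exact h2
  have h3 := hasSum_integral_of_summable_integral_norm
    (μ := AddCircle.haarAddCircle (T := 2 * Real.pi))
    (F := fun i t => fourier (-k) t • (u i * fourier (φ i) t)) ?_ ?_
  · simp only [h1] at h3
    rw [h3.tsum_eq]
    unfold fourierCoeff
    congr 1
    funext t
    rw [← (hF t).tsum_eq]
    simp only [smul_eq_mul]
    rw [tsum_mul_left]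
  · intro i
    apply Continuous.integrable_of_hasCompactSupport
    · fun_prop
    · exact HasCompactSupport.of_compactSpace _
  · have : ∀ i, ∫ t, ‖fourier (-k) t • (u i * fourier (φ i) t)‖ ∂(AddCircle.haarAddCircle (T := 2 * Real.pi)) = ‖u i‖ := by
      intro i
      simp only [norm_smul, norm_mul, fnorm, one_mul, mul_one]
      simp
    simpa only [this] using hu

theorem mult_key {ι : Type} [Countable ι] (u : ι → ℂ) (φ : ι → ℤ) (w : ℤ → ℂ)
    (F : AddCircle (2 * Real.pi) → ℂ) (hu : Summable fun i => ‖u i‖)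
    (hF : ∀ x, HasSum (fun i => u i * fourier (φ i) x) (F x))
    (hw : Summable fun i => ‖w (φ i) * u i‖) (x : AddCircle (2 * Real.pi)) :
    ∑' k : ℤ, w k * fourierCoeff F k * fourier k x =
      ∑' i, w (φ i) * u i * fourier (φ i) x := by
  have hs : Summable (fun i => w (φ i) * u i * fourier (φ i) x) := by
    apply Summable.of_norm
    simpa only [norm_mul, fnorm, mul_one] using hw
  rw [← (hs.hasSum.tsum_fiberwise φ).tsum_eq]
  congr 1
  funext k
  rw [coeff_hasSum u φ F hu hF k, ← tsum_subtype, ← tsum_mul_left, ← tsum_mul_right]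
  congr 1
  funext i
  have : φ i = k := i.2
  rw [this]

theorem lam_summable {a b : ℤ → ℂ} (ha : Summable fun k => ‖a k‖) (hb : Summable fun k => ‖b k‖)
    (ha1 : Summable fun k : ℤ => ‖(k : ℂ) * a k‖) (hb1 : Summable fun k : ℤ => ‖(k : ℂ) * b k‖) :
    Summable fun p : ℤ × ℤ => ‖((p.1 + p.2 : ℤ) : ℂ)‖ * ‖a p.1 * b p.2‖ := by
  have h := (ha1.mul_norm hb).add (ha.mul_norm hb1)
  refine Summable.of_nonneg_of_le (fun _ => by positivity) (fun p => ?_) h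
  rw [← norm_mul]
  refine le_trans (le_of_eq ?_) (norm_add_le _ _)
  congr 1
  push_cast
  ring

theorem sign_norm_le (m : ℤ) : ‖(m.sign : ℂ)‖ ≤ 1 := by
  rcases lt_trichotomy m 0 with h | h | h
  · simp [Int.sign_eq_neg_one_of_neg h]
  · simp [h]
  · simp [Int.sign_eq_one_of_pos h]

theorem core_id (m n : ℤ) (hm : m ≠ 0) (hn : n ≠ 0) :
    |m + n| = -(|m + n| * m.sign * n.sign) + (m + n) * (m.sign + n.sign) := by
  rcases lt_or_gt_of_ne hm with h | h <;> rcases lt_or_gt_of_ne hn with h' | h'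
  · rw [Int.sign_eq_neg_one_of_neg h, Int.sign_eq_neg_one_of_neg h', abs_of_neg (by omega)]; ring
  · rw [Int.sign_eq_neg_one_of_neg h, Int.sign_eq_one_of_pos h']; ring
  · rw [Int.sign_eq_one_of_pos h, Int.sign_eq_neg_one_of_neg h']; ring
  · rw [Int.sign_eq_one_of_pos h, Int.sign_eq_one_of_pos h', abs_of_pos (by omega)]; ring

theorem prod_hasSum {a b : ℤ → ℂ} (ha : Summable fun k => ‖a k‖) (hb : Summable fun k => ‖b k‖)
    (x : AddCircle (2 * Real.pi)) :
    HasSum (fun p : ℤ × ℤ => (a p.1 * b p.2) * fourier (p.1 + p.2) x)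
      ((∑' k, a k * fourier k x) * (∑' k, b k * fourier k x)) := by
  have ha' : Summable fun k => ‖a k * fourier k x‖ := by simpa only [norm_mul, fnorm, mul_one] using ha
  have hb' : Summable fun k => ‖b k * fourier k x‖ := by simpa only [norm_mul, fnorm, mul_one] using hb
  rw [tsum_mul_tsum_of_summable_norm ha' hb']
  refine (summable_mul_of_summable_norm ha' hb').hasSum.congr_fun ?_
  intro p
  rw [fourier_add]; ring

/-- For smooth real-valued zero-mean `f, g` on `S¹`,
`Λ(f·g) = Λ(Hf·Hg) + ∂₁(f·Hg + g·Hf)` pointwise. -/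
theorem lambda_product_identity (f g : AddCircle (2 * Real.pi) → ℂ)
    (hf : IsNice f) (hg : IsNice g) :
    ∀ x, Lamn 1 (fun y => f y * g y) x =
      Lamn 1 (fun y => Hop f y * Hop g y) x +
        Dn 1 (fun y => f y * Hop g y + g y * Hop f y) x := by
  intro x
  obtain ⟨hf1, -, hf0, hfs⟩ := hf
  obtain ⟨hg1, -, hg0, hgs⟩ := hg
  have nrm : ∀ c : ℤ → ℂ, (∀ n : ℕ, Summable fun k : ℤ => ((|k| : ℤ) : ℝ) ^ n * ‖c k‖) →
      (Summable fun k => ‖c k‖) ∧ (Summable fun k : ℤ => ‖(k : ℂ) * c k‖) ∧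
      (Summable fun k : ℤ => ‖-Complex.I * (k.sign : ℂ) * c k‖) := by
    intro c hc
    have h0 : Summable fun k => ‖c k‖ := by simpa using hc 0
    refine ⟨h0, by simpa using hc 1, ?_⟩
    refine Summable.of_nonneg_of_le (fun _ => norm_nonneg _) (fun k => ?_) h0
    rw [norm_mul, norm_mul]
    have := sign_norm_le k
    have h2 : ‖-Complex.I‖ = 1 := by simp
    rw [h2, one_mul]
    exact mul_le_of_le_one_left (norm_nonneg _) this
  obtain ⟨ha, ha1, haH⟩ := nrm _ hf1
  obtain ⟨hb, hb1, hbH⟩ := nrm _ hg1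
  set a := fourierCoeff f with hadef
  set b := fourierCoeff g with hbdef
  have hab := ha.mul_norm hb
  have hlam := lam_summable ha hb ha1 hb1
  -- bounded multiplier
  have bdd : ∀ (s : ℤ × ℤ → ℂ), (∀ p, ‖s p‖ ≤ 2) → ∀ w : ℤ → ℂ, (∀ k, ‖w k‖ = ‖(k : ℂ)‖) →
      (Summable fun p : ℤ × ℤ => ‖s p * (a p.1 * b p.2)‖) ∧
      (Summable fun p : ℤ × ℤ => ‖w (p.1 + p.2) * (s p * (a p.1 * b p.2))‖) := by
    intro s hs w hw
    constructor
    · refine Summable.of_nonneg_of_le (fun _ => norm_nonneg _) (fun p => ?_) (hab.mul_left 2)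
      rw [norm_mul]
      exact mul_le_mul_of_nonneg_right (hs p) (norm_nonneg _)
    · refine Summable.of_nonneg_of_le (fun _ => norm_nonneg _) (fun p => ?_) (hlam.mul_left 2)
      rw [norm_mul, norm_mul, hw, mul_left_comm]
      exact mul_le_mul_of_nonneg_right (hs p) (by positivity)
  have hwL : ∀ k : ℤ, ‖((|k| : ℤ) : ℂ) ^ 1‖ = ‖(k : ℂ)‖ := by intro k; simp
  have hwD : ∀ k : ℤ, ‖(Complex.I * (k : ℂ)) ^ 1‖ = ‖(k : ℂ)‖ := by intro k; simp
  let s1 : ℤ × ℤ → ℂ := fun _ => 1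
  let s2 : ℤ × ℤ → ℂ := fun p => -((p.1.sign : ℂ) * (p.2.sign : ℂ))
  let s3 : ℤ × ℤ → ℂ := fun p => -Complex.I * ((p.1.sign : ℂ) + (p.2.sign : ℂ))
  have hs1 : ∀ p, ‖s1 p‖ ≤ 2 := by intro p; simp [s1]
  have hs2 : ∀ p, ‖s2 p‖ ≤ 2 := by
    intro p
    have h1 := sign_norm_le p.1
    have h2 := sign_norm_le p.2
    simp only [s2, norm_neg, norm_mul]
    nlinarith [norm_nonneg (p.1.sign : ℂ), norm_nonneg (p.2.sign : ℂ)]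
  have hs3 : ∀ p, ‖s3 p‖ ≤ 2 := by
    intro p
    have h1 := sign_norm_le p.1
    have h2 := sign_norm_le p.2
    have h3 := norm_add_le (p.1.sign : ℂ) (p.2.sign : ℂ)
    simp only [s3, norm_neg, norm_mul, Complex.norm_I, one_mul]
    linarith
  obtain ⟨A1, B1⟩ := bdd s1 hs1 _ hwL
  obtain ⟨A2, B2⟩ := bdd s2 hs2 _ hwL
  obtain ⟨A3, B3⟩ := bdd s3 hs3 _ hwD
  have F1 : ∀ y, HasSum (fun p : ℤ × ℤ => s1 p * (a p.1 * b p.2) * fourier (p.1 + p.2) y)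
      (f y * g y) := by
    intro y
    rw [hfs y, hgs y]
    simpa [s1] using prod_hasSum ha hb y
  have F2 : ∀ y, HasSum (fun p : ℤ × ℤ => s2 p * (a p.1 * b p.2) * fourier (p.1 + p.2) y)
      (Hop f y * Hop g y) := by
    intro y
    refine (prod_hasSum haH hbH y).congr_fun ?_
    intro p
    simp only [s2]
    linear_combination (- (p.1.sign : ℂ) * p.2.sign * a p.1 * b p.2 * fourier (p.1 + p.2) y) * Complex.I_sq
  have F3 : ∀ y, HasSum (fun p : ℤ × ℤ => s3 p * (a p.1 * b p.2) * fourier (p.1 + p.2) y)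
      (f y * Hop g y + g y * Hop f y) := by
    intro y
    have e1 := prod_hasSum ha hbH y
    have e2 := prod_hasSum haH hb y
    rw [← hfs y] at e1
    rw [← hgs y, mul_comm _ (g y)] at e2
    refine (e1.add e2).congr_fun ?_
    intro p
    simp only [s3]
    ring
  have K1 := mult_key _ (fun p : ℤ × ℤ => p.1 + p.2) (fun k : ℤ => ((|k| : ℤ) : ℂ) ^ 1) _ A1 F1 B1 x
  have K2 := mult_key _ (fun p : ℤ × ℤ => p.1 + p.2) (fun k : ℤ => ((|k| : ℤ) : ℂ) ^ 1) _ A2 F2 B2 x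
  have K3 := mult_key _ (fun p : ℤ × ℤ => p.1 + p.2) (fun k : ℤ => (Complex.I * (k : ℂ)) ^ 1) _ A3 F3 B3 x
  unfold Lamn Dn
  refine K1.trans ?_
  refine Eq.trans ?_ (congrArg₂ (· + ·) K2 K3).symm
  have S2 : Summable fun p : ℤ × ℤ => ((|p.1 + p.2| : ℤ) : ℂ) ^ 1 * (s2 p * (a p.1 * b p.2)) * fourier (p.1 + p.2) x := by
    apply Summable.of_norm
    refine B2.congr fun p => ?_
    rw [norm_mul _ (fourier (p.1 + p.2) x), fnorm, mul_one]
  have S3 : Summable fun p : ℤ × ℤ => (Complex.I * ((p.1 + p.2 : ℤ) : ℂ)) ^ 1 * (s3 p * (a p.1 * b p.2)) * fourier (p.1 + p.2) x := by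
    apply Summable.of_norm
    refine B3.congr fun p => ?_
    rw [norm_mul _ (fourier (p.1 + p.2) x), fnorm, mul_one]
  refine Eq.trans ?_ (S2.tsum_add S3)
  congr 1
  funext p
  obtain ⟨m, n⟩ := p
  simp only [s1, s2, s3, pow_one]
  by_cases hm : m = 0
  · simp [hm, hf0]
  by_cases hn : n = 0
  · simp [hn, hg0]
  have hc : ((|m + n| : ℤ) : ℂ) = -(((|m + n| : ℤ) : ℂ) * (m.sign : ℂ) * (n.sign : ℂ)) +
      ((m + n : ℤ) : ℂ) * ((m.sign : ℂ) + (n.sign : ℂ)) := by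
    exact_mod_cast core_id m n hm hn
  linear_combination (a m * b n * fourier (m + n) x) * hc + (((m + n : ℤ) : ℂ) * ((m.sign : ℂ) + (n.sign : ℂ)) * a m * b n * fourier (m + n) x) * Complex.I_sq
end
end

section
/- Let f and g be smooth real-valued functions on S¹ with zero mean. Then ∂₁g·Hg + (∂₁f)² + (1/2)Λ(g² − (Hg)²) − [Λ,g]g + [Λ,f]Λf = −Λ((Hg)²) + ∂₁([H,f]Λf) pointwise on S¹. -/
open Complex Filter MeasureTheory

noncomputable section

abbrev Circ := AddCircle (2 * Real.pi)

def Sser (a : ℤ → ℂ) : Circ → ℂ := fun x => ∑' k : ℤ, a k * fourier k x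

def Rap (a : ℤ → ℂ) : Prop :=
  ∀ n : ℕ, Summable fun k : ℤ => (1 + |(k : ℝ)|) ^ n * ‖a k‖

def cnv (a b : ℤ → ℂ) : ℤ → ℂ := fun n => ∑' k : ℤ, a (n - k) * b k

def mH (k : ℤ) : ℂ := (-Complex.I) * (k.sign : ℂ)
def mL (k : ℤ) : ℂ := ((|k| : ℤ) : ℂ)
def mD (k : ℤ) : ℂ := Complex.I * (k : ℂ)

lemma Rap.norm {a : ℤ → ℂ} (h : Rap a) : Summable fun k => ‖a k‖ := by
  simpa using h 0

lemma norm_fou (k : ℤ) (x : Circ) : ‖(fourier k x : ℂ)‖ = 1 := by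
  rw [fourier_apply]; exact Circle.norm_coe _

lemma Rap.summ {a : ℤ → ℂ} (h : Rap a) (x : Circ) :
    Summable fun k : ℤ => a k * fourier k x := by
  apply Summable.of_norm
  simpa only [norm_mul, norm_fou, mul_one, one_mul, integral_const, probReal_univ, one_smul] using h.norm

lemma coeff_S {a : ℤ → ℂ} (h : Rap a) (n : ℤ) : fourierCoeff (Sser a) n = a n := by
  have hi : ∀ k : ℤ, Integrable (fun t : Circ => (fourier (-n) t : ℂ) * (a k * fourier k t))
      AddCircle.haarAddCircle := by
    intro k
    apply Continuous.integrable_of_hasCompactSupport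
    · fun_prop
    · exact HasCompactSupport.of_compactSpace _
  have h1 := hasSum_integral_of_summable_integral_norm (μ := AddCircle.haarAddCircle) hi (by
    simpa only [norm_mul, norm_fou, mul_one, one_mul, integral_const, probReal_univ, one_smul] using h.norm)
  have h2 : ∀ k : ℤ, ∫ t : Circ, (fourier (-n) t : ℂ) * (a k * fourier k t)
      ∂AddCircle.haarAddCircle = if k = n then a n else 0 := by
    intro k
    have h3 := congrFun (fourierCoeff_fourier (T := 2 * Real.pi) k) n
    have h4 := fourierCoeff.const_mul (T := 2 * Real.pi) (fourier k) (a k) n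
    rw [h3] at h4
    rw [fourierCoeff] at h4
    simp only [smul_eq_mul] at h4
    rw [h4]
    by_cases hk : k = n
    · subst hk; simp
    · rw [if_neg hk, Pi.single_eq_of_ne (Ne.symm hk)]; simp
  simp only [h2] at h1
  have h5 := h1.unique (hasSum_ite_eq n (a n))
  rw [← h5, fourierCoeff]
  congr 1
  funext t
  rw [Sser, smul_eq_mul, tsum_mul_left]

lemma Rap.mul {a : ℤ → ℂ} (h : Rap a) {m : ℤ → ℂ} (hm : ∀ k, ‖m k‖ ≤ 1 + |(k : ℝ)|) :
    Rap (fun k => m k * a k) := by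
  intro n
  refine Summable.of_nonneg_of_le (fun k => by positivity) (fun k => ?_) (h (n + 1))
  rw [norm_mul, pow_succ, mul_assoc]
  gcongr
  exact hm k

lemma hmH (k : ℤ) : ‖mH k‖ ≤ 1 + |(k : ℝ)| := by
  have h0 := abs_nonneg (k : ℝ)
  rcases lt_trichotomy k 0 with h | h | h
  · simp [mH, Int.sign_eq_neg_one_of_neg h]
  · simp [mH, h]
  · simp [mH, Int.sign_eq_one_of_pos h]

lemma hmL (k : ℤ) : ‖mL k‖ ≤ 1 + |(k : ℝ)| := by
  rw [mL, Complex.norm_intCast]; push_cast; rw [abs_abs]; linarith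

lemma hmD (k : ℤ) : ‖mD k‖ ≤ 1 + |(k : ℝ)| := by
  rw [mD, norm_mul, Complex.norm_I, Complex.norm_intCast]; linarith

lemma Rap.sub {a b : ℤ → ℂ} (ha : Rap a) (hb : Rap b) : Rap (fun k => a k - b k) := by
  intro n
  refine Summable.of_nonneg_of_le (fun k => by positivity) (fun k => ?_) ((ha n).add (hb n))
  rw [← mul_add]
  gcongr
  exact norm_sub_le _ _

def shr : ℤ × ℤ ≃ ℤ × ℤ where
  toFun p := (p.1 - p.2, p.2)
  invFun p := (p.1 + p.2, p.2)
  left_inv p := by simp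
  right_inv p := by simp

lemma sum_shr {a b : ℤ → ℂ} (ha : Summable fun k => ‖a k‖) (hb : Summable fun k => ‖b k‖) :
    Summable fun p : ℤ × ℤ => a (p.1 - p.2) * b p.2 :=
  shr.summable_iff.mpr (summable_mul_of_summable_norm ha hb)

lemma sum_cnv {a b : ℤ → ℂ} (ha : Rap a) (hb : Rap b) (n : ℤ) :
    Summable fun k : ℤ => a (n - k) * b k :=
  (sum_shr ha.norm hb.norm).prod_factor n

lemma Rap.cnv {a b : ℤ → ℂ} (ha : Rap a) (hb : Rap b) : Rap (cnv a b) := by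
  intro n
  have h1 : Summable fun p : ℤ × ℤ =>
      ((1 + |((p.1 - p.2 : ℤ) : ℝ)|) ^ n * ‖a (p.1 - p.2)‖) * ((1 + |(p.2 : ℝ)|) ^ n * ‖b p.2‖) :=
    shr.summable_iff.mpr ((ha n).mul_of_nonneg (hb n) (fun k => by positivity)
      (fun k => by positivity))
  have h2 := h1.prod
  refine Summable.of_nonneg_of_le (fun k => by positivity) (fun k => ?_) h2
  have h3 : Summable fun j : ℤ => ‖a (k - j) * b j‖ := (sum_cnv ha hb k).norm
  calc (1 + |(k : ℝ)|) ^ n * ‖_root_.cnv a b k‖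
      ≤ (1 + |(k : ℝ)|) ^ n * ∑' j : ℤ, ‖a (k - j) * b j‖ := by
        gcongr
        exact norm_tsum_le_tsum_norm h3
    _ = ∑' j : ℤ, (1 + |(k : ℝ)|) ^ n * ‖a (k - j) * b j‖ := by rw [tsum_mul_left]
    _ ≤ _ := by
        refine Summable.tsum_le_tsum (fun j => ?_) (h3.mul_left _) (h1.prod_factor k)
        have h4 : 1 + |(k : ℝ)| ≤ (1 + |((k - j : ℤ) : ℝ)|) * (1 + |(j : ℝ)|) := by
          have := abs_add_le ((k : ℝ) - j) j
          rw [sub_add_cancel] at this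
          push_cast
          nlinarith [mul_nonneg (abs_nonneg ((k : ℝ) - j)) (abs_nonneg (j : ℝ))]
        rw [norm_mul]
        calc (1 + |(k : ℝ)|) ^ n * (‖a (k - j)‖ * ‖b j‖)
            ≤ ((1 + |((k - j : ℤ) : ℝ)|) * (1 + |(j : ℝ)|)) ^ n * (‖a (k - j)‖ * ‖b j‖) := by
              gcongr
          _ = _ := by rw [mul_pow]; ring

lemma S_mul {a b : ℤ → ℂ} (ha : Rap a) (hb : Rap b) (x : Circ) :
    Sser a x * Sser b x = Sser (cnv a b) x := by
  have ha' : Summable fun k : ℤ => ‖a k * fourier k x‖ := (ha.summ x).norm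
  have hb' : Summable fun k : ℤ => ‖b k * fourier k x‖ := (hb.summ x).norm
  unfold Sser
  have hs : Summable fun c : ℤ × ℤ =>
      a (shr c).1 * fourier (shr c).1 x * (b (shr c).2 * fourier (shr c).2 x) :=
    shr.summable_iff.mpr (summable_mul_of_summable_norm ha' hb')
  rw [tsum_mul_tsum_of_summable_norm ha' hb', ← shr.tsum_eq, hs.tsum_prod]
  congr 1
  funext n
  rw [cnv, ← tsum_mul_right]
  congr 1
  funext k
  have : (fourier n x : ℂ) = fourier (n - k) x * fourier k x := by
    rw [← fourier_add, sub_add_cancel]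
  simp only [shr, Equiv.coe_fn_mk]
  rw [this]; ring

lemma S_sub {a b : ℤ → ℂ} (ha : Rap a) (hb : Rap b) (x : Circ) :
    Sser a x - Sser b x = Sser (fun k => a k - b k) x := by
  unfold Sser
  rw [← (ha.summ x).tsum_sub (hb.summ x)]
  congr 1; funext k; ring

lemma Hop_S {a : ℤ → ℂ} (h : Rap a) : Hop (Sser a) = Sser (fun k => mH k * a k) := by
  funext x; simp only [Hop, coeff_S h]; rfl

lemma Lam_S {a : ℤ → ℂ} (h : Rap a) : Lamn 1 (Sser a) = Sser (fun k => mL k * a k) := by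
  funext x; simp only [Lamn, coeff_S h, pow_one]; rfl

lemma D_S {a : ℤ → ℂ} (h : Rap a) : Dn 1 (Sser a) = Sser (fun k => mD k * a k) := by
  funext x; simp only [Dn, coeff_S h, pow_one]; rfl

lemma cnv_comm (a b : ℤ → ℂ) (n : ℤ) : cnv a b n = cnv b a n := by
  unfold cnv
  rw [← (Equiv.subLeft n).tsum_eq]
  congr 1; funext k
  simp [mul_comm]

lemma nice_rap {f : Circ → ℂ} (hf : IsNice f) : Rap (fourierCoeff f) := by
  intro n
  have h := ((hf.1 0).add (hf.1 n)).mul_left ((2 : ℝ) ^ (n - 1))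
  refine Summable.of_nonneg_of_le (fun k => by positivity) (fun k => ?_) h
  have h1 := add_pow_le (zero_le_one (α := ℝ)) (abs_nonneg (k : ℝ)) n
  rw [← add_mul, ← mul_assoc]
  push_cast
  rw [one_pow] at h1
  rw [pow_zero]
  gcongr

/-- symbol identity for the `g` part. -/
lemma sym_g (j k : ℤ) (hj : j ≠ 0) (hk : k ≠ 0) :
    mD j * mH k + mH j * mD k + mL j + mL k
      - mL (j + k) + mL (j + k) * (mH j * mH k) = 0 := by
  have hI := Complex.I_mul_I
  have key : (j * k.sign + j.sign * k + |j| + |k| - |j + k| - |j + k| * (j.sign * k.sign) : ℤ)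
      = 0 := by
    rcases lt_or_gt_of_ne hj with h | h <;> rcases lt_or_gt_of_ne hk with h' | h'
    · rw [Int.sign_eq_neg_one_of_neg h, Int.sign_eq_neg_one_of_neg h', abs_of_neg h, abs_of_neg h',
        abs_of_neg (by omega)]; ring
    · rw [Int.sign_eq_neg_one_of_neg h, Int.sign_eq_one_of_pos h', abs_of_neg h, abs_of_pos h']
      ring
    · rw [Int.sign_eq_one_of_pos h, Int.sign_eq_neg_one_of_neg h', abs_of_pos h, abs_of_neg h']
      ring
    · rw [Int.sign_eq_one_of_pos h, Int.sign_eq_one_of_pos h', abs_of_pos h, abs_of_pos h',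
        abs_of_pos (by omega)]; ring
  have key' := congrArg (Int.cast : ℤ → ℂ) key
  push_cast at key'
  simp only [mD, mH, mL]
  push_cast
  linear_combination key' + (-(j : ℂ) * (k.sign : ℂ) - (j.sign : ℂ) * k
    + ((|j + k| : ℤ) : ℂ) * (j.sign : ℂ) * (k.sign : ℂ)) * hI

/-- symbol identity for the `f` part. -/
lemma sym_f (n k : ℤ) :
    mD (n - k) * mD k + mL n * mL k - mL k * mL k
      - mD n * (mH n * mL k - mH k * mL k) = 0 := by
  have hI := Complex.I_mul_I
  have a1 : (n.sign : ℂ) * n = ((|n| : ℤ) : ℂ) := by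
    exact_mod_cast Int.sign_mul_self_eq_abs n
  have a2 : (k.sign : ℂ) * ((|k| : ℤ) : ℂ) = k := by
    exact_mod_cast Int.sign_mul_abs k
  have a3 : ((|k| : ℤ) : ℂ) * ((|k| : ℤ) : ℂ) = k * k := by
    exact_mod_cast abs_mul_abs_self k
  simp only [mD, mH, mL]
  rw [a3, ← a1]
  push_cast at *
  linear_combination ((n - k : ℂ) * k + n * n.sign * ((|k| : ℤ) : ℂ) - n * k) * hI - I * I * n * a2

lemma g_coef {a : ℤ → ℂ} (h : Rap a) (h0 : a 0 = 0) (n : ℤ) :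
    2 * cnv (fun k => mD k * a k) (fun k => mH k * a k) n + 2 * cnv a (fun k => mL k * a k) n
      - mL n * cnv a a n
      + mL n * cnv (fun k => mH k * a k) (fun k => mH k * a k) n = 0 := by
  have hD := h.mul hmD
  have hH := h.mul hmH
  have hL := h.mul hmL
  have e1 := cnv_comm (fun k => mD k * a k) (fun k => mH k * a k) n
  have e2 := cnv_comm a (fun k => mL k * a k) n
  have s := (((((sum_cnv hD hH n).hasSum.add (sum_cnv hH hD n).hasSum).add
    (sum_cnv hL h n).hasSum).add (sum_cnv h hL n).hasSum).sub
    ((sum_cnv h h n).hasSum.mul_left (mL n))).add ((sum_cnv hH hH n).hasSum.mul_left (mL n))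
  have z : ∀ k : ℤ, mD (n - k) * a (n - k) * (mH k * a k) + mH (n - k) * a (n - k) * (mD k * a k)
      + mL (n - k) * a (n - k) * a k + a (n - k) * (mL k * a k) - mL n * (a (n - k) * a k)
      + mL n * (mH (n - k) * a (n - k) * (mH k * a k)) = 0 := by
    intro k
    by_cases hk : k = 0
    · simp [hk, h0]
    by_cases hj : n - k = 0
    · simp [hj, h0]
    have := sym_g (n - k) k hj hk
    rw [sub_add_cancel] at this
    linear_combination a (n - k) * a k * this
  simp only [z] at s
  have t := s.unique hasSum_zero
  change cnv (fun k => mD k * a k) (fun k => mH k * a k) n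
    + cnv (fun k => mH k * a k) (fun k => mD k * a k) n
    + cnv (fun k => mL k * a k) a n + cnv a (fun k => mL k * a k) n - mL n * cnv a a n
    + mL n * cnv (fun k => mH k * a k) (fun k => mH k * a k) n = 0 at t
  rw [← e1, ← e2] at t
  linear_combination t

lemma f_coef {a : ℤ → ℂ} (h : Rap a) (n : ℤ) :
    cnv (fun k => mD k * a k) (fun k => mD k * a k) n + mL n * cnv a (fun k => mL k * a k) n
      - cnv a (fun k => mL k * (mL k * a k)) n
      - mD n * (mH n * cnv a (fun k => mL k * a k) n
        - cnv a (fun k => mH k * (mL k * a k)) n) = 0 := by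
  have hD := h.mul hmD
  have hL := h.mul hmL
  have hLL := hL.mul hmL
  have hHL := hL.mul hmH
  have s := (((sum_cnv hD hD n).hasSum.add ((sum_cnv h hL n).hasSum.mul_left (mL n))).sub
    (sum_cnv h hLL n).hasSum).sub
    ((((sum_cnv h hL n).hasSum.mul_left (mH n)).sub (sum_cnv h hHL n).hasSum).mul_left (mD n))
  have z : ∀ k : ℤ, mD (n - k) * a (n - k) * (mD k * a k) + mL n * (a (n - k) * (mL k * a k))
      - a (n - k) * (mL k * (mL k * a k)) - mD n * (mH n * (a (n - k) * (mL k * a k))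
      - a (n - k) * (mH k * (mL k * a k))) = 0 := by
    intro k
    linear_combination a (n - k) * a k * sym_f n k
  simp only [z] at s
  exact s.unique hasSum_zero

/-- Grouping of the `O(1)` nonlinear terms:
`∂₁g·Hg + (∂₁f)² + ½Λ(g² − (Hg)²) − [Λ,g]g + [Λ,f]Λf = −Λ((Hg)²) + ∂₁([H,f]Λf)`. -/
theorem order_one_grouping (f g : AddCircle (2 * Real.pi) → ℂ)
    (hf : IsNice f) (hg : IsNice g) :
    ∀ x, Dn 1 g x * Hop g x + (Dn 1 f x) ^ 2
        + (1 / 2) * Lamn 1 (fun y => g y * g y - Hop g y * Hop g y) x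
        - (Lamn 1 (fun y => g y * g y) x - g x * Lamn 1 g x)
        + (Lamn 1 (fun y => f y * Lamn 1 f y) x - f x * Lamn 1 (Lamn 1 f) x)
      = -Lamn 1 (fun y => Hop g y * Hop g y) x
        + Dn 1 (fun y => Hop (fun z => f z * Lamn 1 f z) y - f y * Hop (Lamn 1 f) y) x := by
  intro x
  have ha := nice_rap hf
  have hb := nice_rap hg
  have b0 := hg.2.2.1
  have ef : f = Sser (fourierCoeff f) := funext hf.2.2.2
  have eg : g = Sser (fourierCoeff g) := funext hg.2.2.2
  generalize fourierCoeff f = a at *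
  generalize fourierCoeff g = b at *
  subst ef eg
  have aD := ha.mul hmD
  have aL := ha.mul hmL
  have aLL := aL.mul hmL
  have aHL := aL.mul hmH
  have bD := hb.mul hmD
  have bL := hb.mul hmL
  have bH := hb.mul hmH
  have cbb := hb.cnv hb
  have cHH := bH.cnv bH
  have caL := ha.cnv aL
  have caHL := ha.cnv aHL
  rw [D_S hb, Hop_S hb, D_S ha, Lam_S hb, Lam_S ha, Lam_S aL, Hop_S aL]
  simp only [S_mul hb hb, S_mul bH bH, S_mul ha aL, S_mul ha aHL, S_mul ha aLL, S_mul hb bL,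
    S_mul bD bH, pow_two, S_mul aD aD, S_sub cbb cHH]
  change Sser _ x + _ + 1 / 2 * Lamn 1 (Sser _) x - (Lamn 1 (Sser _) x - _) +
    (Lamn 1 (Sser _) x - _) = -Lamn 1 (Sser _) x
    + Dn 1 (fun y => Hop (Sser _) y - Sser _ y) x
  rw [Lam_S (cbb.sub cHH), Lam_S cbb, Lam_S caL, Lam_S cHH, Hop_S caL]
  simp only [S_sub (caL.mul hmH) caHL]
  change _ = _ + Dn 1 (Sser _) x
  rw [D_S ((caL.mul hmH).sub caHL)]
  have s := (((((((((bD.cnv bH).summ x).hasSum.add ((aD.cnv aD).summ x).hasSum).add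
    ((((cbb.sub cHH).mul hmL).summ x).hasSum.mul_left (1 / 2))).sub
    (((cbb.mul hmL).summ x).hasSum.sub ((hb.cnv bL).summ x).hasSum)).add
    (((caL.mul hmL).summ x).hasSum.sub ((ha.cnv aLL).summ x).hasSum)).add
    ((cHH.mul hmL).summ x).hasSum).sub
    ((((caL.mul hmH).sub caHL).mul hmD).summ x).hasSum))
  have t := s.unique (a₂ := 0) (by
    convert hasSum_zero using 1
    funext n
    have h1 := g_coef hb b0 n
    have h2 := f_coef ha n
    linear_combination (fourier n x : ℂ) * (1 / 2 * h1 + h2))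
  unfold Sser
  linear_combination t
end
end
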